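/- arXiv:2003.07949 — 2 statements merged into one kernel-verified Lean document; each statement's English description precedes it below -/
import Mathlib

section
/- Let y(k) = C A^k x0 be the nominal output from an arbitrary initial state x0 ∈ ℝ^n. For every T0 ≥ ν + μ − 1 there exists N0 ∈ ℕ with N0 ≤ T0 such that Rank(Y_{N0,T0}) = Γ({y(k)}), where ν and μ are the observability and excitability indices. -/
open Matrix

noncomputable section

/-- The observability matrix `O_N = [C; CA; …; CA^{N-1}]`, with block rows indexed by `Fin N`. -/
def obsMat {n p : ℕ} (A : Matrix (Fin n) (Fin n) ℝ) (C : Matrix (Fin p) (Fin n) ℝ)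
    (N : ℕ) : Matrix (Fin N × Fin p) (Fin n) ℝ :=
  fun ir j => (C * A ^ (ir.1 : ℕ)) ir.2 j

/-- The observability index `ν = min {N : Rank O_N = Rank O_{N+j} for all j}`. -/
def obsIndex {n p : ℕ} (A : Matrix (Fin n) (Fin n) ℝ) (C : Matrix (Fin p) (Fin n) ℝ) : ℕ :=
  sInf {N : ℕ | ∀ j : ℕ, (obsMat A C (N + j)).rank = (obsMat A C N).rank}

/-- The Krylov/excitability matrix `E_N(x) = [x, Ax, …, A^{N-1} x]`. -/
def excMat {n : ℕ} (A : Matrix (Fin n) (Fin n) ℝ) (x : Fin n → ℝ) (N : ℕ) :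
    Matrix (Fin n) (Fin N) ℝ :=
  fun i k => (A ^ (k : ℕ)).mulVec x i

/-- The excitability index at `x`: `μ(x) = min {i : Rank E_i(x) = Rank E_{i+j}(x) for all j}`. -/
def excIndexAt {n : ℕ} (A : Matrix (Fin n) (Fin n) ℝ) (x : Fin n → ℝ) : ℕ :=
  sInf {i : ℕ | ∀ j : ℕ, (excMat A x (i + j)).rank = (excMat A x i).rank}

/-- The excitability index `μ = max_{x ∈ ℝⁿ} μ(x)`. -/
def excIndex {n : ℕ} (A : Matrix (Fin n) (Fin n) ℝ) : ℕ :=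
  sSup (Set.range (excIndexAt A))

/-- The Hankel matrix `Y_{N,T}` of the nominal output `y(k) = C A^k x0`; its `j`-th column is
the stacked vector `(y(j), …, y(j+N-1))`. -/
def hankelMat {n p : ℕ} (A : Matrix (Fin n) (Fin n) ℝ) (C : Matrix (Fin p) (Fin n) ℝ)
    (x0 : Fin n → ℝ) (N T : ℕ) : Matrix (Fin N × Fin p) (Fin (T - N + 1)) ℝ :=
  fun ir j => (C * A ^ ((j : ℕ) + (ir.1 : ℕ))).mulVec x0 ir.2

/-- The Hankel information `Γ({y(k)}) = sup {Rank Y_{N,T} : N ≤ T}`. -/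
def hankelInfo {n p : ℕ} (A : Matrix (Fin n) (Fin n) ℝ) (C : Matrix (Fin p) (Fin n) ℝ)
    (x0 : Fin n → ℝ) : ℕ :=
  sSup {r : ℕ | ∃ N T : ℕ, N ≤ T ∧ r = (hankelMat A C x0 N T).rank}

lemma aux_factor {m a b : Type*} [Fintype m] [Fintype a] [Fintype b] [DecidableEq a]
    [DecidableEq b] (A : Matrix m a ℝ) (B : Matrix m b ℝ)
    (h : ∀ j, ∃ r, A *ᵥ r = B.col j) : ∃ S : Matrix a b ℝ, B = A * S := by
  choose r hr using h
  refine ⟨fun i j => r j i, ?_⟩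
  ext i j
  have := congrFun (hr j) i
  simp only [Matrix.col_apply] at this
  rw [← this]
  rfl

lemma aux_rank {m a b : Type*} [Fintype m] [Fintype a] [Fintype b] [DecidableEq a]
    [DecidableEq b] (A : Matrix m a ℝ) (B : Matrix m b ℝ) (R : Matrix b a ℝ)
    (hA : A = B * R) (hr : B.rank ≤ A.rank) : ∃ S : Matrix a b ℝ, B = A * S := by
  have hle : LinearMap.range A.mulVecLin ≤ LinearMap.range B.mulVecLin := by
    rw [hA, Matrix.mulVecLin_mul]
    exact LinearMap.range_comp_le_range _ _
  have heq := Submodule.eq_of_le_of_finrank_le hle hr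
  apply aux_factor
  intro j
  have : B.col j ∈ LinearMap.range A.mulVecLin := by
    rw [heq]
    exact ⟨Pi.single j 1, by simp⟩
  obtain ⟨r, hr⟩ := this
  exact ⟨r, by simpa using hr⟩

lemma aux_pow {n : ℕ} (A : Matrix (Fin n) (Fin n) ℝ) (k : ℕ) :
    ∃ c : Fin n → ℝ, A ^ k = ∑ i, c i • A ^ (i : ℕ) := by
  rcases Nat.eq_zero_or_pos n with h0 | h0
  · subst h0
    exact ⟨0, Subsingleton.elim _ _⟩
  · rw [Matrix.pow_eq_aeval_mod_charpoly]
    have hd : ((Polynomial.X ^ k : Polynomial ℝ) %ₘ A.charpoly).natDegree < n := by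
      have := Polynomial.natDegree_modByMonic_lt (Polynomial.X ^ k : Polynomial ℝ)
        A.charpoly_monic (by
          intro h
          have h2 := A.charpoly_natDegree_eq_dim
          rw [h] at h2
          simp at h2
          omega)
      simpa [A.charpoly_natDegree_eq_dim] using this
    rw [Polynomial.aeval_eq_sum_range' hd]
    exact ⟨fun i => ((Polynomial.X ^ k : Polynomial ℝ) %ₘ A.charpoly).coeff i,
      (Fin.sum_univ_eq_sum_range (fun i =>
        ((Polynomial.X ^ k : Polynomial ℝ) %ₘ A.charpoly).coeff i • A ^ i) n).symm⟩

lemma exc_mono {n : ℕ} (A : Matrix (Fin n) (Fin n) ℝ) (x : Fin n → ℝ) {N M : ℕ} (h : N ≤ M) :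
    ∃ R : Matrix (Fin M) (Fin N) ℝ, excMat A x N = excMat A x M * R := by
  apply aux_factor
  intro j
  exact ⟨Pi.single (Fin.castLE h j) 1, by rw [Matrix.mulVec_single_one]; rfl⟩

lemma obs_mono {n p : ℕ} (A : Matrix (Fin n) (Fin n) ℝ) (C : Matrix (Fin p) (Fin n) ℝ)
    {N M : ℕ} (h : N ≤ M) :
    ∃ R : Matrix (Fin M × Fin p) (Fin N × Fin p) ℝ, (obsMat A C N)ᵀ = (obsMat A C M)ᵀ * R := by
  apply aux_factor
  intro j
  exact ⟨Pi.single (Fin.castLE h j.1, j.2) 1, by rw [Matrix.mulVec_single_one]; rfl⟩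

lemma exc_ch {n : ℕ} (A : Matrix (Fin n) (Fin n) ℝ) (x : Fin n → ℝ) (N : ℕ) :
    ∃ R : Matrix (Fin n) (Fin N) ℝ, excMat A x N = excMat A x n * R := by
  apply aux_factor
  intro j
  obtain ⟨c, hc⟩ := aux_pow A j
  refine ⟨c, ?_⟩
  ext i
  have h : (A ^ (j : ℕ) *ᵥ x) i = ∑ q : Fin n, (A ^ (q : ℕ) *ᵥ x) i * c q := by
    rw [hc, Matrix.sum_mulVec, Finset.sum_apply]
    refine Finset.sum_congr rfl fun q _ => ?_
    rw [Matrix.smul_mulVec, Pi.smul_apply, smul_eq_mul, mul_comm]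
  exact h.symm

lemma obs_ch {n p : ℕ} (A : Matrix (Fin n) (Fin n) ℝ) (C : Matrix (Fin p) (Fin n) ℝ) (N : ℕ) :
    ∃ R : Matrix (Fin n × Fin p) (Fin N × Fin p) ℝ, (obsMat A C N)ᵀ = (obsMat A C n)ᵀ * R := by
  apply aux_factor
  intro j
  obtain ⟨c, hc⟩ := aux_pow A j.1
  refine ⟨fun q => if q.2 = j.2 then c q.1 else 0, ?_⟩
  ext i
  simp only [Matrix.col_apply, obsMat, hc, Matrix.mul_sum, Matrix.sum_apply,
    Matrix.transpose_apply, Matrix.mulVec, dotProduct, Fintype.sum_prod_type]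
  simp [mul_comm]

lemma exc_factor {n : ℕ} (A : Matrix (Fin n) (Fin n) ℝ) (x : Fin n → ℝ) :
    excIndexAt A x ≤ n ∧ ∀ N, ∃ R : Matrix (Fin (excIndexAt A x)) (Fin N) ℝ,
      excMat A x N = excMat A x (excIndexAt A x) * R := by
  have hn : n ∈ {i : ℕ | ∀ j : ℕ, (excMat A x (i + j)).rank = (excMat A x i).rank} := by
    intro j
    apply le_antisymm
    · obtain ⟨R, hR⟩ := exc_ch A x (n + j)
      rw [hR]; exact Matrix.rank_mul_le_left _ _
    · obtain ⟨R, hR⟩ := exc_mono A x (Nat.le_add_right n j)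
      rw [hR]; exact Matrix.rank_mul_le_left _ _
  refine ⟨Nat.sInf_le hn, fun N => ?_⟩
  have hm : ∀ j : ℕ, (excMat A x (excIndexAt A x + j)).rank
      = (excMat A x (excIndexAt A x)).rank := Nat.sInf_mem ⟨n, hn⟩
  obtain ⟨R, hR⟩ := exc_mono A x (Nat.le_add_right (excIndexAt A x) N)
  obtain ⟨S, hS⟩ := aux_rank _ _ R hR (hm N).le
  obtain ⟨U, hU⟩ := exc_mono A x (Nat.le_add_left N (excIndexAt A x))
  exact ⟨S * U, by rw [← Matrix.mul_assoc, ← hS, hU]⟩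

lemma obs_factor {n p : ℕ} (A : Matrix (Fin n) (Fin n) ℝ) (C : Matrix (Fin p) (Fin n) ℝ)
    (N : ℕ) : ∃ L : Matrix (Fin N × Fin p) (Fin (obsIndex A C) × Fin p) ℝ,
      obsMat A C N = L * obsMat A C (obsIndex A C) := by
  have hn : n ∈ {i : ℕ | ∀ j : ℕ, (obsMat A C (i + j)).rank = (obsMat A C i).rank} := by
    intro j
    rw [← Matrix.rank_transpose, ← Matrix.rank_transpose (obsMat A C n)]
    apply le_antisymm
    · obtain ⟨R, hR⟩ := obs_ch A C (n + j)
      rw [hR]; exact Matrix.rank_mul_le_left _ _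
    · obtain ⟨R, hR⟩ := obs_mono A C (Nat.le_add_right n j)
      rw [hR]; exact Matrix.rank_mul_le_left _ _
  have hm : ∀ j : ℕ, (obsMat A C (obsIndex A C + j)).rank
      = (obsMat A C (obsIndex A C)).rank := Nat.sInf_mem ⟨n, hn⟩
  obtain ⟨R, hR⟩ := obs_mono A C (Nat.le_add_right (obsIndex A C) N)
  obtain ⟨S, hS⟩ := aux_rank _ _ R hR (by
    rw [Matrix.rank_transpose, Matrix.rank_transpose]; exact (hm N).le)
  obtain ⟨U, hU⟩ := obs_mono A C (Nat.le_add_left N (obsIndex A C))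
  refine ⟨(S * U)ᵀ, ?_⟩
  apply Matrix.transpose_injective
  rw [Matrix.transpose_mul, Matrix.transpose_transpose, ← Matrix.mul_assoc, ← hS, hU]

lemma hankel_eq {n p : ℕ} (A : Matrix (Fin n) (Fin n) ℝ) (C : Matrix (Fin p) (Fin n) ℝ)
    (x0 : Fin n → ℝ) (N T : ℕ) :
    hankelMat A C x0 N T = obsMat A C N * excMat A x0 (T - N + 1) := by
  ext ir j
  have : hankelMat A C x0 N T ir j = ((C * A ^ (ir.1 : ℕ)) *ᵥ (A ^ (j : ℕ) *ᵥ x0)) ir.2 := by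
    rw [Matrix.mulVec_mulVec, Matrix.mul_assoc, ← pow_add, add_comm]
    rfl
  rw [this]
  rfl

lemma hankel_le {n p : ℕ} (A : Matrix (Fin n) (Fin n) ℝ) (C : Matrix (Fin p) (Fin n) ℝ)
    (x0 : Fin n → ℝ) (T0 : ℕ) (hT0 : obsIndex A C + excIndex A - 1 ≤ T0) :
    ∃ N0 : ℕ, N0 ≤ T0 ∧ ∀ N T, (hankelMat A C x0 N T).rank ≤ (hankelMat A C x0 N0 T0).rank := by
  have hx : excIndexAt A x0 ≤ excIndex A :=
    le_csSup ⟨n, by rintro _ ⟨x, rfl⟩; exact (exc_factor A x).1⟩ ⟨x0, rfl⟩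
  by_cases hν : obsIndex A C ≤ T0
  · refine ⟨_, hν, fun N T => ?_⟩
    obtain ⟨L, hL⟩ := obs_factor A C N
    obtain ⟨R, hR⟩ := (exc_factor A x0).2 (T - N + 1)
    obtain ⟨S, hS⟩ := exc_mono A x0
      (show excIndexAt A x0 ≤ T0 - obsIndex A C + 1 by omega)
    rw [hankel_eq, hankel_eq, hL, hR, hS]
    have : L * obsMat A C (obsIndex A C) *
        (excMat A x0 (T0 - obsIndex A C + 1) * S * R) =
        L * ((obsMat A C (obsIndex A C) * excMat A x0 (T0 - obsIndex A C + 1)) * (S * R)) := by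
      simp only [Matrix.mul_assoc]
    rw [this]
    exact (Matrix.rank_mul_le_right _ _).trans (Matrix.rank_mul_le_left _ _)
  · refine ⟨0, Nat.zero_le _, fun N T => ?_⟩
    have h0 : excIndexAt A x0 = 0 := by omega
    obtain ⟨R, hR⟩ := (exc_factor A x0).2 (T - N + 1)
    rw [hankel_eq, hR]
    refine (Matrix.rank_mul_le_right _ _).trans ((Matrix.rank_mul_le_left _ _).trans ?_)
    refine (Matrix.rank_le_width _).trans ?_
    omega

/-- **Minimum horizon length.** For every initial state `x0` and every `T0 ≥ ν + μ − 1`,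
there exists `N0 ≤ T0` such that `Rank Y_{N0,T0} = Γ({y(k)})`. -/
theorem minimum_horizon_length {n p : ℕ}
    (A : Matrix (Fin n) (Fin n) ℝ) (C : Matrix (Fin p) (Fin n) ℝ) (x0 : Fin n → ℝ)
    (T0 : ℕ) (hT0 : obsIndex A C + excIndex A - 1 ≤ T0) :
    ∃ N0 : ℕ, N0 ≤ T0 ∧ (hankelMat A C x0 N0 T0).rank = hankelInfo A C x0 := by
  obtain ⟨N0, h1, h2⟩ := hankel_le A C x0 T0 hT0
  refine ⟨N0, h1, le_antisymm ?_ ?_⟩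
  · exact le_csSup ⟨(hankelMat A C x0 N0 T0).rank, by rintro _ ⟨N, T, _, rfl⟩; exact h2 N T⟩
      ⟨N0, T0, h1, rfl⟩
  · refine csSup_le ⟨_, N0, T0, h1, rfl⟩ ?_
    rintro _ ⟨N, T, _, rfl⟩
    exact h2 N T
end
end

section
/- Let u : ℕ → ℝ^m be an attack input with u(k) = 0 for all k < T, where T ≥ ν + 1 and ν is the observability index, and let y^u denote the output of the system driven by u from initial state x0 and y^0 = C A^k x0 the nominal output from the same initial state. If y^u(k) = y^0(k) for all k ∈ ℕ, then for every N ∈ ℕ the stacked vector u_{T:T+N−1} = (u(T), …, u(T+N−1)) lies in Ker(C_N); conversely, if u_{T:T+N−1} ∈ Ker(C_N) for every N ∈ ℕ, then y^u(k) = y^0(k) for all k ∈ ℕ. -/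
open Matrix

noncomputable section

/-- The block lower-triangular Toeplitz matrix `C_N` (the `(i,j)` block is `D` if `i = j`,
`C A^{i-j-1} B` if `i > j`, and `0` if `i < j`). -/
def ctrlMat {n p m : ℕ} (A : Matrix (Fin n) (Fin n) ℝ) (B : Matrix (Fin n) (Fin m) ℝ)
    (C : Matrix (Fin p) (Fin n) ℝ) (D : Matrix (Fin p) (Fin m) ℝ) (N : ℕ) :
    Matrix (Fin N × Fin p) (Fin N × Fin m) ℝ :=
  fun ir js =>
    if (ir.1 : ℕ) = (js.1 : ℕ) then D ir.2 js.2
    else if (js.1 : ℕ) < (ir.1 : ℕ) then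
      (C * A ^ ((ir.1 : ℕ) - (js.1 : ℕ) - 1) * B) ir.2 js.2
    else 0

/-- The state trajectory of `x(k+1) = A x(k) + B u(k)` from initial state `x0`. -/
def traj {n m : ℕ} (A : Matrix (Fin n) (Fin n) ℝ) (B : Matrix (Fin n) (Fin m) ℝ)
    (u : ℕ → Fin m → ℝ) (x0 : Fin n → ℝ) : ℕ → Fin n → ℝ
  | 0 => x0
  | k + 1 => A.mulVec (traj A B u x0 k) + B.mulVec (u k)

/-- The output `y(k) = C x(k) + D u(k)` of the system driven by input `u` from `x0`. -/
def output {n p m : ℕ} (A : Matrix (Fin n) (Fin n) ℝ) (B : Matrix (Fin n) (Fin m) ℝ)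
    (C : Matrix (Fin p) (Fin n) ℝ) (D : Matrix (Fin p) (Fin m) ℝ)
    (u : ℕ → Fin m → ℝ) (x0 : Fin n → ℝ) (k : ℕ) : Fin p → ℝ :=
  C.mulVec (traj A B u x0 k) + D.mulVec (u k)

theorem traj_before {n m : ℕ}
    (A : Matrix (Fin n) (Fin n) ℝ) (B : Matrix (Fin n) (Fin m) ℝ)
    (u : ℕ → Fin m → ℝ) (x0 : Fin n → ℝ) (T : ℕ) (hu : ∀ k : ℕ, k < T → u k = 0) :
    ∀ k, k ≤ T → traj A B u x0 k = (A ^ k).mulVec x0 := by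
  intro k
  induction k with
  | zero => intro _; simp [traj]
  | succ k ih =>
    intro h
    rw [traj, ih (by omega), hu k (by omega), Matrix.mulVec_zero, add_zero,
      Matrix.mulVec_mulVec, pow_succ']

theorem traj_after {n m : ℕ}
    (A : Matrix (Fin n) (Fin n) ℝ) (B : Matrix (Fin n) (Fin m) ℝ)
    (u : ℕ → Fin m → ℝ) (x0 : Fin n → ℝ) (T : ℕ) (hu : ∀ k : ℕ, k < T → u k = 0) (i : ℕ) :
    traj A B u x0 (T + i) = (A ^ (T + i)).mulVec x0 +
      ∑ j ∈ Finset.range i, (A ^ (i - j - 1) * B).mulVec (u (T + j)) := by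
  induction i with
  | zero => simpa using traj_before A B u x0 T hu T le_rfl
  | succ i ih =>
    rw [← add_assoc, traj, ih, Matrix.mulVec_add, Matrix.mulVec_mulVec, ← pow_succ',
      Finset.sum_range_succ, Matrix.mulVec_sum, add_assoc]
    congr 2
    · apply Finset.sum_congr rfl
      intro j hj
      have := Finset.mem_range.1 hj
      rw [Matrix.mulVec_mulVec, ← Matrix.mul_assoc, ← pow_succ']
      congr 3
      omega
    · simp

theorem ctrl_entry {n p m : ℕ}
    (A : Matrix (Fin n) (Fin n) ℝ) (B : Matrix (Fin n) (Fin m) ℝ)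
    (C : Matrix (Fin p) (Fin n) ℝ) (D : Matrix (Fin p) (Fin m) ℝ)
    (v : ℕ → Fin m → ℝ) (N : ℕ) (i : Fin N) (r : Fin p) :
    (ctrlMat A B C D N).mulVec (fun js : Fin N × Fin m => v (js.1 : ℕ) js.2) (i, r) =
      (C.mulVec (∑ j ∈ Finset.range (i : ℕ), (A ^ ((i : ℕ) - j - 1) * B).mulVec (v j))
        + D.mulVec (v i)) r := by
  have h1 : (ctrlMat A B C D N).mulVec (fun js : Fin N × Fin m => v (js.1 : ℕ) js.2) (i, r) =
      ∑ j ∈ Finset.range N, (if (i : ℕ) = j then D.mulVec (v j) r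
        else if j < (i : ℕ) then (C * A ^ ((i : ℕ) - j - 1) * B).mulVec (v j) r else 0) := by
    rw [Finset.sum_range]
    simp only [Matrix.mulVec, dotProduct, Fintype.sum_prod_type, ctrlMat]
    apply Finset.sum_congr rfl
    intro j _
    split_ifs <;> simp
  have h2 : N = (i : ℕ) + 1 + (N - (i : ℕ) - 1) := by have := i.2; omega
  rw [h1]
  clear h1
  obtain ⟨i, hi⟩ := i
  simp only at h2 ⊢
  clear hi
  generalize N - i - 1 = M at h2
  subst h2
  rw [Finset.sum_range_add, Finset.sum_range_succ, Matrix.mulVec_sum, Pi.add_apply,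
    Finset.sum_apply]
  have h3 : ∀ x ∈ Finset.range M, (if (i : ℕ) = (i : ℕ) + 1 + x
      then D.mulVec (v ((i : ℕ) + 1 + x)) r
      else if (i : ℕ) + 1 + x < (i : ℕ) then
        (C * A ^ ((i : ℕ) - ((i : ℕ) + 1 + x) - 1) * B).mulVec (v ((i : ℕ) + 1 + x)) r
      else 0) = 0 := by
    intro x _
    rw [if_neg (by omega), if_neg (by omega)]
  rw [Finset.sum_eq_zero h3, add_zero, if_pos rfl]
  congr 1
  apply Finset.sum_congr rfl
  intro j hj
  have := Finset.mem_range.1 hj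
  rw [if_neg (by omega), if_pos this, Matrix.mulVec_mulVec, Matrix.mul_assoc]

/-- **Model-based undetectable attacks.** An attack input `u` with `u(k) = 0` for `k < T`,
where `T ≥ ν + 1`, is undetectable (the attacked output coincides with the nominal output
for all times) if and only if `u_{T:T+N-1} ∈ Ker C_N` for every `N ∈ ℕ`. -/
theorem model_based_undetectable_attacks {n p m : ℕ}
    (A : Matrix (Fin n) (Fin n) ℝ) (B : Matrix (Fin n) (Fin m) ℝ)
    (C : Matrix (Fin p) (Fin n) ℝ) (D : Matrix (Fin p) (Fin m) ℝ)
    (u : ℕ → Fin m → ℝ) (x0 : Fin n → ℝ)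
    (T : ℕ) (hT : obsIndex A C + 1 ≤ T)
    (hu : ∀ k : ℕ, k < T → u k = 0) :
    (∀ k : ℕ, output A B C D u x0 k = C.mulVec ((A ^ k).mulVec x0)) ↔
    (∀ N : ℕ,
      (ctrlMat A B C D N).mulVec (fun js : Fin N × Fin m => u (T + (js.1 : ℕ)) js.2) = 0) := by
  have key : ∀ i : ℕ, output A B C D u x0 (T + i) = C.mulVec ((A ^ (T + i)).mulVec x0) +
      (C.mulVec (∑ j ∈ Finset.range i, (A ^ (i - j - 1) * B).mulVec (u (T + j)))
        + D.mulVec (u (T + i))) := by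
    intro i
    rw [output, traj_after A B u x0 T hu, Matrix.mulVec_add, add_assoc]
  constructor
  · intro h N
    funext ⟨i, r⟩
    have h1 := key i
    rw [h, left_eq_add] at h1
    rw [ctrl_entry A B C D (fun j => u (T + j)) N i r, h1]
    rfl
  · intro h k
    rcases lt_or_ge k T with hk | hk
    · rw [output, traj_before A B u x0 T hu k hk.le, hu k hk, Matrix.mulVec_zero, add_zero]
    · obtain ⟨i, rfl⟩ := Nat.exists_eq_add_of_le hk
      rw [key, add_eq_left]
      funext r
      have h1 := ctrl_entry A B C D (fun j => u (T + j)) (i + 1) ⟨i, by omega⟩ r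
      rw [h] at h1
      exact h1.symm
end
end
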